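/- arXiv:q-alg/9703002 — 3 statements merged into one kernel-verified Lean document; each statement's English description precedes it below -/
import Mathlib

section
/- Let k be an algebraically closed field, G an abelian group, and χ a commutation factor on G with values in kˣ. Then there exists a bimultiplicative map σ : G × G → kˣ such that for all g, h ∈ G one has χ(g,h)·σ(g,h)·σ(h,g)⁻¹ = χ₀(g,h), where χ₀(g,h) = −1 if χ(g,g) = −1 and χ(h,h) = −1, and χ₀(g,h) = 1 otherwise. (Thus any G-color Lie algebra with commutation factor χ can be cocycle-twisted into a G-graded super-Lie algebra with commutation factor χ₀.) -/
/-!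
Write `χ₀` for the super commutation factor. Since `χ g g = ±1`, the quotient `χ₀ / χ` is a
bimultiplicative map which is trivial on the diagonal, so it suffices to write every alternating
bilinear map `B : M × M → A` of abelian groups, with `A` divisible, as `s(x, y) - s(y, x)`.

The value `B(x, y)` prescribes a map on the image of `t ↦ t - τ t`, where `τ` is the flip of
`M ⊗ M`; as `A` is injective, this map extends to all of `M ⊗ M` once it is known that `B` kills
the symmetric tensors. A symmetric tensor, together with the relations witnessing its symmetry,
already lives on a finitely generated submodule of `M`. That submodule is a direct sum of cyclic
modules, on each of which `B` vanishes, so there `s` can be taken to be the strictly upper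
triangular part of `B`.
-/

open scoped DirectSum TensorProduct

section Bilinear

variable {R M N A : Type*} [CommRing R] [AddCommGroup M] [Module R M] [AddCommGroup N] [Module R N]
  [AddCommGroup A] [Module R A]

theorem isAlt_compl₁₂_self {B : M →ₗ[R] M →ₗ[R] A} (hB : B.IsAlt) (f : N →ₗ[R] M) :
    (B.compl₁₂ f f).IsAlt :=
  fun x ↦ hB (f x)

theorem eq_zero_of_isAlt_of_span_singleton_eq_top {B : M →ₗ[R] M →ₗ[R] A} (hB : B.IsAlt) {g : M}
    (hg : R ∙ g = ⊤) : B = 0 := by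
  ext x y
  obtain ⟨a, rfl⟩ := (Submodule.span_singleton_eq_top_iff R g).mp hg x
  obtain ⟨b, rfl⟩ := (Submodule.span_singleton_eq_top_iff R g).mp hg y
  simp [hB.self_eq_zero]

theorem exists_eq_sub_flip_directSum {ι : Type*} [LinearOrder ι] {V : ι → Type*}
    [∀ i, AddCommGroup (V i)] [∀ i, Module R (V i)]
    {B : (⨁ i, V i) →ₗ[R] (⨁ i, V i) →ₗ[R] A} (hB : B.IsAlt)
    (hV : ∀ i, ∃ g : V i, R ∙ g = ⊤) : ∃ s, B = s - s.flip := by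
  let upper : (⨁ i, V i) →ₗ[R] (⨁ i, V i) →ₗ[R] A :=
    DirectSum.toModule R ι _ fun i ↦ LinearMap.flip <| DirectSum.toModule R ι _ fun j ↦
      if i < j then (B.compl₁₂ (DirectSum.lof R ι V i) (DirectSum.lof R ι V j)).flip else 0
  have upper_lof (i j : ι) (x : V i) (y : V j) :
      upper (DirectSum.lof R ι V i x) (DirectSum.lof R ι V j y) =
        if i < j then B (DirectSum.lof R ι V i x) (DirectSum.lof R ι V j y) else 0 := by
    simp only [upper, DirectSum.toModule_lof, LinearMap.flip_apply]
    split_ifs <;> simp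
  refine ⟨upper, ?_⟩
  ext i x j y
  simp only [LinearMap.comp_apply, LinearMap.sub_apply, LinearMap.flip_apply, upper_lof]
  rcases lt_trichotomy i j with hij | rfl | hji
  · simp [hij, hij.not_gt]
  · obtain ⟨g, hg⟩ := hV i
    have block_eq_zero := eq_zero_of_isAlt_of_span_singleton_eq_top
      (isAlt_compl₁₂_self hB (DirectSum.lof R ι V i)) hg
    simpa using LinearMap.congr_fun₂ block_eq_zero x y
  · simp [hji, hji.not_gt, hB.neg]

theorem exists_eq_sub_flip_prod {B : M × N →ₗ[R] M × N →ₗ[R] A} (hB : B.IsAlt)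
    (hM : ∃ s, B.compl₁₂ (.inl R M N) (.inl R M N) = s - s.flip)
    (hN : ∃ s, B.compl₁₂ (.inr R M N) (.inr R M N) = s - s.flip) :
    ∃ s, B = s - s.flip := by
  obtain ⟨sM, hsM⟩ := hM
  obtain ⟨sN, hsN⟩ := hN
  refine ⟨sM.compl₁₂ (.fst R M N) (.fst R M N) + sN.compl₁₂ (.snd R M N) (.snd R M N) +
    B.compl₁₂ (.inl R M N ∘ₗ .fst R M N) (.inr R M N ∘ₗ .snd R M N), ?_⟩
  ext x y
  · simpa [Prod.mk_zero_zero] using LinearMap.congr_fun₂ hsM x y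
  · simp [Prod.mk_zero_zero]
  · simp [Prod.mk_zero_zero, hB.neg]
  · simpa [Prod.mk_zero_zero] using LinearMap.congr_fun₂ hsN x y

theorem exists_eq_sub_flip_of_equiv (e : M ≃ₗ[R] N) {B : M →ₗ[R] M →ₗ[R] A}
    (h : ∃ s, B.compl₁₂ e.symm.toLinearMap e.symm.toLinearMap = s - s.flip) :
    ∃ s, B = s - s.flip := by
  obtain ⟨s, hs⟩ := h
  refine ⟨s.compl₁₂ e.toLinearMap e.toLinearMap, ?_⟩
  ext x y
  simpa using LinearMap.congr_fun₂ hs (e x) (e y)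

theorem exists_eq_sub_flip_of_finite [IsDomain R] [IsPrincipalIdealRing R] [Module.Finite R M]
    {B : M →ₗ[R] M →ₗ[R] A} (hB : B.IsAlt) : ∃ s, B = s - s.flip := by
  obtain ⟨n, ι, _, p, _, e, ⟨φ⟩⟩ := Module.equiv_free_prod_directSum R M
  let : LinearOrder ι := IsWellOrder.linearOrder WellOrderingRel
  have hB' := isAlt_compl₁₂_self hB φ.symm.toLinearMap
  refine exists_eq_sub_flip_of_equiv φ (exists_eq_sub_flip_prod hB' ?_ ?_)
  · refine exists_eq_sub_flip_of_equiv (finsuppLEquivDirectSum R R (Fin n)) ?_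
    refine exists_eq_sub_flip_directSum (isAlt_compl₁₂_self (isAlt_compl₁₂_self hB' _) _)
      fun _ ↦ ⟨1, Ideal.span_singleton_one⟩
  · refine exists_eq_sub_flip_directSum (isAlt_compl₁₂_self hB' _) fun i ↦
      ⟨Submodule.Quotient.mk 1, (Submodule.span_singleton_eq_top_iff R _).mpr fun x ↦ ?_⟩
    obtain ⟨r, rfl⟩ := Submodule.Quotient.mk_surjective _ x
    exact ⟨r, by rw [← Submodule.Quotient.mk_smul, smul_eq_mul, mul_one]⟩

theorem exists_fg_map_inclusion_eq_zero {P : Submodule R M} {Q : Submodule R N} (hP : P.FG)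
    (hQ : Q.FG) {t : P ⊗[R] Q} (ht : TensorProduct.mapIncl P Q t = 0) :
    ∃ (P' : Submodule R M) (Q' : Submodule R N) (hPP' : P ≤ P') (hQQ' : Q ≤ Q'), P'.FG ∧ Q'.FG ∧
      TensorProduct.map (Submodule.inclusion hPP') (Submodule.inclusion hQQ') t = 0 := by
  have left_zero : P.subtype.rTensor N (Q.subtype.lTensor P t) = 0 := by
    rwa [← LinearMap.comp_apply, LinearMap.rTensor_comp_lTensor]
  obtain ⟨P', hPP', hP', hP't⟩ := TensorProduct.eq_zero_of_fg_of_subtype_eq_zero hP left_zero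
  have right_zero : Q.subtype.rTensor P'
      (TensorProduct.comm R P' Q ((Submodule.inclusion hPP').rTensor Q t)) = 0 := by
    rw [← LinearMap.comp_apply, LinearMap.rTensor_comp_lTensor] at hP't
    rw [LinearMap.rTensor_comm, ← LinearMap.comp_apply (LinearMap.lTensor _ _),
      LinearMap.lTensor_comp_rTensor, hP't, map_zero]
  obtain ⟨Q', hQQ', hQ', hQ't⟩ := TensorProduct.eq_zero_of_fg_of_subtype_eq_zero hQ right_zero
  refine ⟨P', Q', hPP', hQQ', hP', hQ', ?_⟩
  rwa [LinearMap.rTensor_comm, LinearEquiv.map_eq_zero_iff, ← LinearMap.comp_apply,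
    LinearMap.lTensor_comp_rTensor] at hQ't

theorem exists_fg_mapIncl_eq (t : M ⊗[R] M) :
    ∃ P : Submodule R M, P.FG ∧ ∃ u, TensorProduct.mapIncl P P u = t := by
  obtain ⟨P, Q, hP, hQ, ht⟩ :=
    TensorProduct.exists_finite_submodule_of_setFinite {t} (Set.finite_singleton t)
  exact ⟨P ⊔ Q, (Module.Finite.iff_fg.mp hP).sup (Module.Finite.iff_fg.mp hQ),
    TensorProduct.range_mapIncl_mono le_sup_left le_sup_right (ht rfl)⟩

theorem exists_fg_comm_eq_self {t : M ⊗[R] M} (ht : TensorProduct.comm R M M t = t) :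
    ∃ S : Submodule R M, S.FG ∧
      ∃ v, TensorProduct.comm R S S v = v ∧ TensorProduct.mapIncl S S v = t := by
  obtain ⟨P, hP, u, rfl⟩ := exists_fg_mapIncl_eq t
  have asymmetry_zero :
      TensorProduct.mapIncl P P (TensorProduct.comm R P P u - u) = 0 := by
    rw [map_sub, TensorProduct.map_comm, ht, sub_self]
  obtain ⟨Q, Q', hPQ, hPQ', hQ, hQ', hu⟩ :=
    exists_fg_map_inclusion_eq_zero hP hP asymmetry_zero
  have hQS : Q ≤ Q ⊔ Q' := le_sup_left
  have hQ'S : Q' ≤ Q ⊔ Q' := le_sup_right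
  let j := Submodule.inclusion (hPQ.trans hQS)
  refine ⟨Q ⊔ Q', hQ.sup hQ', TensorProduct.map j j u, ?_, ?_⟩
  · rw [← TensorProduct.map_comm, ← sub_eq_zero, ← map_sub]
    simpa only [TensorProduct.map_map, map_zero] using!
      congrArg (TensorProduct.map (Submodule.inclusion hQS) (Submodule.inclusion hQ'S)) hu
  · exact TensorProduct.map_map _ _ _ _ u

variable [IsDomain R] [IsPrincipalIdealRing R]

theorem lift_eq_zero_of_comm_eq_self {B : M →ₗ[R] M →ₗ[R] A} (hB : B.IsAlt) {t : M ⊗[R] M}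
    (ht : TensorProduct.comm R M M t = t) : TensorProduct.lift B t = 0 := by
  obtain ⟨S, hS, v, hv, rfl⟩ := exists_fg_comm_eq_self ht
  have : Module.Finite R S := Module.Finite.iff_fg.mpr hS
  obtain ⟨s, hs⟩ := exists_eq_sub_flip_of_finite (isAlt_compl₁₂_self hB S.subtype)
  calc TensorProduct.lift B (TensorProduct.mapIncl S S v)
      = TensorProduct.lift (B.compl₁₂ S.subtype S.subtype) v :=
        LinearMap.congr_fun (TensorProduct.lift_comp_map ..) v
    _ = TensorProduct.lift s v - TensorProduct.lift s.flip v := by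
        rw [hs]
        exact LinearMap.congr_fun (map_sub (TensorProduct.lift.equiv (.id R) S S A) s s.flip) v
    _ = TensorProduct.lift s v - TensorProduct.lift s (TensorProduct.comm R S S v) :=
        congrArg _ (LinearMap.congr_fun (TensorProduct.lift_comp_comm_eq _ _ _ s) v).symm
    _ = 0 := by rw [hv, sub_self]

theorem exists_eq_sub_flip_of_baer (hA : Module.Baer R A) {B : M →ₗ[R] M →ₗ[R] A}
    (hB : B.IsAlt) : ∃ s, B = s - s.flip := by
  let D : M ⊗[R] M →ₗ[R] M ⊗[R] M := LinearMap.id - (TensorProduct.comm R M M).toLinearMap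
  have ker_le : LinearMap.ker D ≤ LinearMap.ker (TensorProduct.lift B) := fun t ht ↦
    lift_eq_zero_of_comm_eq_self hB (sub_eq_zero.mp ht).symm
  obtain ⟨s, hs⟩ := hA.extension_property ((LinearMap.ker D).liftQ D le_rfl)
    (LinearMap.ker_eq_bot.mp (Submodule.ker_liftQ_eq_bot _ _ _ le_rfl))
    ((LinearMap.ker D).liftQ (TensorProduct.lift B) ker_le)
  refine ⟨TensorProduct.curry s, ?_⟩
  ext x y
  calc B x y = s (x ⊗ₜ[R] y - y ⊗ₜ[R] x) :=
        (LinearMap.congr_fun hs (Submodule.Quotient.mk (x ⊗ₜ[R] y))).symm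
    _ = s (x ⊗ₜ[R] y) - s (y ⊗ₜ[R] x) := map_sub ..

end Bilinear

section Bimultiplicative

variable {G A : Type*} [CommGroup G] [CommGroup A]

/-- A bimultiplicative map, written additively as a `ℤ`-bilinear map. -/
def bimulEquivBilin : (G →* G →* A) ≃ (Additive G →ₗ[ℤ] Additive G →ₗ[ℤ] Additive A) where
  toFun β := AddMonoidHom.toIntLinearMap <|
    AddMonoidHom.mk' (fun x ↦ (β x.toMul).toAdditive.toIntLinearMap) fun x y ↦ by ext; simp
  invFun s := MonoidHom.mk' (fun g ↦ MonoidHom.toAdditive.symm (s (.ofMul g)).toAddMonoidHom)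
    fun g h ↦ by ext; simp
  left_inv _ := rfl
  right_inv _ := rfl

theorem exists_eq_div_flip_of_rootable [RootableBy A ℕ] {β : G →* G →* A}
    (hβ : ∀ g, β g g = 1) : ∃ σ : G →* G →* A, β = σ / σ.flip := by
  let : DivisibleBy (Additive A) ℕ :=
    divisibleByOfSMulRightSurj _ _ fun hn ↦ RootableBy.surjective_pow A ℕ hn
  let : DivisibleBy (Additive A) ℤ := AddGroup.divisibleByIntOfDivisibleByNat _
  obtain ⟨s, hs⟩ := exists_eq_sub_flip_of_baer (Module.Baer.of_divisible (Additive A))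
    (B := bimulEquivBilin β) fun x ↦ congrArg Additive.ofMul (hβ x.toMul)
  refine ⟨bimulEquivBilin.symm s, ?_⟩
  ext g h
  exact LinearMap.congr_fun₂ hs (.ofMul g) (.ofMul h)

theorem exists_twist_of_diag_eq [RootableBy A ℕ] {χ χ' : G →* G →* A}
    (h : ∀ g, χ g g = χ' g g) :
    ∃ σ : G →* G →* A, ∀ g h, χ g h * σ g h * (σ h g)⁻¹ = χ' g h := by
  obtain ⟨σ, hσ⟩ := exists_eq_div_flip_of_rootable (β := χ' / χ) fun g ↦ by simp [h]
  refine ⟨σ, fun g h ↦ ?_⟩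
  have quotient_eq : χ' g h / χ g h = σ g h / σ h g :=
    DFunLike.congr_fun (DFunLike.congr_fun hσ g) h
  rw [mul_assoc, ← div_eq_mul_inv, ← quotient_eq, mul_div_cancel]

end Bimultiplicative

section CommutationFactor

variable {G A : Type*} [MulOneClass G] [CommGroup A]

/-- The parity `g ↦ χ g g` of a commutation factor `χ`. -/
def commutationParity (χ : G →* G →* A) (hχ : ∀ g h, χ g h * χ h g = 1) : G →* A :=
  MonoidHom.mk' (fun g ↦ χ g g) fun g h ↦ by
    calc χ (g * h) (g * h) = χ g g * χ h h * (χ g h * χ h g) := by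
          simp only [map_mul, MonoidHom.mul_apply]; ac_rfl
      _ = χ g g * χ h h := by rw [hχ, mul_one]

variable [HasDistribNeg A] [DecidableEq A]

/-- The super commutation factor of a parity `ε`, where `g` is odd when `ε g = -1`: odd elements
pair with `h` to `ε h`, the others to `1`. -/
def superFactor (ε : G →* A) (hε : ∀ g, ε g = 1 ∨ ε g = -1) : G →* G →* A :=
  MonoidHom.mk' (fun g ↦ if ε g = -1 then ε else 1) fun g h ↦ by
    have mul_self : ε * ε = 1 := by
      ext x
      rcases hε x with hx | hx <;> simp [hx]
    by_cases one_eq : (1 : A) = -1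
    · have parity_trivial : ε = 1 := by
        ext x
        simpa [← one_eq] using hε x
      simp [parity_trivial]
    · rcases hε g with hg | hg <;> rcases hε h with hh | hh <;> simp [hg, hh, one_eq, mul_self]

theorem superFactor_apply {ε : G →* A} (hε : ∀ g, ε g = 1 ∨ ε g = -1) (g h : G) :
    superFactor ε hε g h = if ε g = -1 ∧ ε h = -1 then -1 else 1 := by
  by_cases hg : ε g = -1
  · by_cases hh : ε h = -1
    · simp [superFactor, hg, hh]
    · simpa [superFactor, hg, hh] using (hε h).resolve_right hh
  · simp [superFactor, hg]

theorem superFactor_self {ε : G →* A} (hε : ∀ g, ε g = 1 ∨ ε g = -1) (g : G) :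
    superFactor ε hε g g = ε g := by
  simp only [superFactor_apply, and_self]
  split_ifs with hg
  · exact hg.symm
  · exact ((hε g).resolve_right hg).symm

end CommutationFactor

theorem units_pow_surjective_of_isAlgClosed {k : Type*} [Field k] [IsAlgClosed k] {n : ℕ}
    (hn : n ≠ 0) : Function.Surjective fun u : kˣ ↦ u ^ n := by
  intro a
  obtain ⟨z, hz⟩ := IsAlgClosed.exists_pow_nat_eq (a : k) hn.pos
  have hz0 : z ≠ 0 := fun h ↦ a.ne_zero (by rw [← hz, h, zero_pow hn])
  exact ⟨Units.mk0 z hz0, Units.ext hz⟩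

open scoped Classical in
theorem scheunert_twist_to_super_general {k : Type*} [CommRing k] [NoZeroDivisors k]
    [RootableBy kˣ ℕ] {G : Type*} [CommGroup G] (χ : G → G → kˣ)
    (hχ_mul_left : ∀ a b c : G, χ (a * b) c = χ a c * χ b c)
    (hχ_mul_right : ∀ a b c : G, χ a (b * c) = χ a b * χ a c)
    (hχ_symm : ∀ g h : G, χ g h * χ h g = 1) :
    ∃ σ : G → G → kˣ,
      (∀ a b c : G, σ (a * b) c = σ a c * σ b c) ∧
      (∀ a b c : G, σ a (b * c) = σ a b * σ a c) ∧
      (∀ g h : G, χ g h * σ g h * (σ h g)⁻¹ =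
        (if χ g g = -1 ∧ χ h h = -1 then (-1 : kˣ) else 1)) := by
  let X : G →* G →* kˣ := MonoidHom.mk' (fun g ↦ MonoidHom.mk' (χ g) (hχ_mul_right g))
    fun a b ↦ MonoidHom.ext (hχ_mul_left a b)
  let ε : G →* kˣ := commutationParity X hχ_symm
  have hε (g : G) : ε g = 1 ∨ ε g = -1 :=
    (Units.inv_eq_self_iff _).mp (inv_eq_of_mul_eq_one_left (hχ_symm g g))
  obtain ⟨σ, hσ⟩ := exists_twist_of_diag_eq (χ := X) fun g ↦ (superFactor_self hε g).symm
  refine ⟨fun g h ↦ σ g h, by simp, by simp, fun g h ↦ ?_⟩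
  exact (hσ g h).trans (superFactor_apply hε g h)

open scoped Classical in
theorem scheunert_twist_to_super {k : Type*} [Field k] [IsAlgClosed k]
    {G : Type*} [CommGroup G] (χ : G → G → kˣ)
    (hχ_mul_left : ∀ a b c : G, χ (a * b) c = χ a c * χ b c)
    (hχ_mul_right : ∀ a b c : G, χ a (b * c) = χ a b * χ a c)
    (hχ_symm : ∀ g h : G, χ g h * χ h g = 1) :
    ∃ σ : G → G → kˣ,
      (∀ a b c : G, σ (a * b) c = σ a c * σ b c) ∧
      (∀ a b c : G, σ a (b * c) = σ a b * σ a c) ∧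
      (∀ g h : G, χ g h * σ g h * (σ h g)⁻¹ =
        (if χ g g = -1 ∧ χ h h = -1 then (-1 : kˣ) else 1)) := by
  let : RootableBy kˣ ℕ := rootableByOfPowLeftSurj kˣ ℕ units_pow_surjective_of_isAlgClosed
  exact scheunert_twist_to_super_general χ hχ_mul_left hχ_mul_right hχ_symm
end

section
/- Let G be an abelian group, k a field, and χ a commutation factor on G with values in kˣ. Define χ₀ : G × G → kˣ by χ₀(g,h) = −1 if χ(g,g) = −1 and χ(h,h) = −1, and χ₀(g,h) = 1 otherwise. Then the pointwise product χ·χ₀ is a commutation factor on G satisfying (χ·χ₀)(g,g) = 1 for all g ∈ G. -/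
/-!
Since `χ g g * χ g g = 1` and `k` is a field, the diagonal of `χ` takes values in `{1, -1}`, and it
is multiplicative because the cross terms `χ a b * χ b a` cancel. The factor `χ₀` is the pullback
along the diagonal of the bilinear form on `{1, -1}` with value `-1` at `(-1, -1)` and `1` elsewhere
(trivial in characteristic two). So `χ₀` is itself a commutation factor, and it agrees with `χ` on
the diagonal.
-/

section SignForm

variable {M : Type*} [DecidableEq M]

/-- The symmetric bilinear form on the sign group `{1, -1}` that is nontrivial only at `(-1, -1)`,
extended by `1` to all of `M`. -/
def signForm [One M] [Neg M] (u v : M) : M :=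
  if u = -1 ∧ v = -1 then -1 else 1

theorem signForm_comm [One M] [Neg M] (u v : M) : signForm u v = signForm v u := by
  simp only [signForm, and_comm]

theorem signForm_mul_self [MulOneClass M] [HasDistribNeg M] (u v : M) :
    signForm u v * signForm u v = 1 := by
  unfold signForm
  split_ifs <;> simp

theorem signForm_one_left [One M] [Neg M] (v : M) : signForm 1 v = 1 := by
  by_cases h : (1 : M) = -1
  · simp [signForm, ← h]
  · simp [signForm, h]

theorem signForm_self [One M] [Neg M] {u : M} (hu : u = 1 ∨ u = -1) : signForm u u = u := by
  rcases hu with rfl | rfl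
  · exact signForm_one_left 1
  · simp [signForm]

theorem signForm_mul_left [MulOneClass M] [HasDistribNeg M] {u v : M} (hu : u = 1 ∨ u = -1)
    (hv : v = 1 ∨ v = -1) (w : M) : signForm (u * v) w = signForm u w * signForm v w := by
  rcases hu with rfl | rfl
  · simp only [one_mul, signForm_one_left]
  rcases hv with rfl | rfl
  · simp only [mul_one, signForm_one_left]
  · rw [signForm_mul_self, neg_mul_neg, one_mul, signForm_one_left]

end SignForm

/-- Commutation factors, allowed here on any type with a multiplication and with values in any
unital one; the identity `mul_swap` still forces the values to be invertible. -/
structure IsCommutationFactor {G M : Type*} [Mul G] [MulOneClass M] (χ : G → G → M) : Prop where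
  map_mul_left : ∀ a b c, χ (a * b) c = χ a c * χ b c
  map_mul_right : ∀ a b c, χ a (b * c) = χ a b * χ a c
  mul_swap : ∀ g h, χ g h * χ h g = 1

namespace IsCommutationFactor

variable {G : Type*} [Mul G]

theorem mul {M : Type*} [CommMonoid M] {χ ψ : G → G → M} (hχ : IsCommutationFactor χ)
    (hψ : IsCommutationFactor ψ) : IsCommutationFactor (χ * ψ) where
  map_mul_left a b c := by
    simp only [Pi.mul_apply, hχ.map_mul_left, hψ.map_mul_left, mul_mul_mul_comm]
  map_mul_right a b c := by
    simp only [Pi.mul_apply, hχ.map_mul_right, hψ.map_mul_right, mul_mul_mul_comm]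
  mul_swap g h := by
    simp only [Pi.mul_apply, mul_mul_mul_comm, hχ.mul_swap, hψ.mul_swap, mul_one]

theorem diag_mul {M : Type*} [Monoid M] {χ : G → G → M} (hχ : IsCommutationFactor χ) (a b : G) :
    χ (a * b) (a * b) = χ a a * χ b b :=
  calc χ (a * b) (a * b) = χ a a * (χ a b * χ b a) * χ b b := by
        simp only [hχ.map_mul_left, hχ.map_mul_right, mul_assoc]
    _ = χ a a * χ b b := by rw [hχ.mul_swap, mul_one]

theorem diag_eq_one_or_neg_one {R : Type*} [Ring R] [NoZeroDivisors R] {χ : G → G → Rˣ}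
    (hχ : IsCommutationFactor χ) (g : G) : χ g g = 1 ∨ χ g g = -1 :=
  (Units.inv_eq_self_iff _).mp (inv_eq_of_mul_eq_one_right (hχ.mul_swap g g))

end IsCommutationFactor

section SuperBicharacter

variable {G M : Type*} [DecidableEq M]

/-- The super bicharacter `χ₀` associated with a commutation factor `χ`. -/
def superBicharacter [One M] [Neg M] (χ : G → G → M) (g h : G) : M :=
  signForm (χ g g) (χ h h)

theorem superBicharacter_comm [One M] [Neg M] (χ : G → G → M) (g h : G) :
    superBicharacter χ g h = superBicharacter χ h g :=
  signForm_comm _ _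

variable [Mul G] [Monoid M] [HasDistribNeg M] {χ : G → G → M}

theorem superBicharacter_mul_left (hχ : IsCommutationFactor χ)
    (hdiag : ∀ g, χ g g = 1 ∨ χ g g = -1) (a b c : G) :
    superBicharacter χ (a * b) c = superBicharacter χ a c * superBicharacter χ b c := by
  simp only [superBicharacter, hχ.diag_mul, signForm_mul_left (hdiag a) (hdiag b)]

theorem isCommutationFactor_superBicharacter (hχ : IsCommutationFactor χ)
    (hdiag : ∀ g, χ g g = 1 ∨ χ g g = -1) : IsCommutationFactor (superBicharacter χ) where
  map_mul_left := superBicharacter_mul_left hχ hdiag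
  map_mul_right a b c := by
    rw [superBicharacter_comm, superBicharacter_mul_left hχ hdiag, superBicharacter_comm χ b,
      superBicharacter_comm χ c]
  mul_swap g h := by
    rw [superBicharacter_comm χ h g]
    exact signForm_mul_self _ _

end SuperBicharacter

theorem mul_super_bicharacter_commutation_factor_general {R G : Type*} [CommRing R]
    [NoZeroDivisors R] [DecidableEq Rˣ] [Mul G] {χ : G → G → Rˣ} (hχ : IsCommutationFactor χ) :
    IsCommutationFactor (χ * superBicharacter χ) ∧ ∀ g, χ g g * superBicharacter χ g g = 1 := by
  have hdiag := hχ.diag_eq_one_or_neg_one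
  refine ⟨hχ.mul (isCommutationFactor_superBicharacter hχ hdiag), fun g => ?_⟩
  calc χ g g * superBicharacter χ g g = χ g g * χ g g := by
        rw [superBicharacter, signForm_self (hdiag g)]
    _ = 1 := hχ.mul_swap g g

/- The pointwise product `χ * χ₀` of a commutation factor `χ` with its associated
super bicharacter `χ₀` is a commutation factor whose diagonal is identically 1. -/
open scoped Classical in
theorem mul_super_bicharacter_commutation_factor {k : Type*} [Field k]
    {G : Type*} [CommGroup G] (χ : G → G → kˣ)
    (hχ_mul_left : ∀ a b c : G, χ (a * b) c = χ a c * χ b c)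
    (hχ_mul_right : ∀ a b c : G, χ a (b * c) = χ a b * χ a c)
    (hχ_symm : ∀ g h : G, χ g h * χ h g = 1) :
    ∀ χ₀ : G → G → kˣ,
      (χ₀ = fun g h => if χ g g = -1 ∧ χ h h = -1 then (-1 : kˣ) else 1) →
      (∀ a b c : G, (χ (a * b) c * χ₀ (a * b) c) =
          (χ a c * χ₀ a c) * (χ b c * χ₀ b c)) ∧
      (∀ a b c : G, (χ a (b * c) * χ₀ a (b * c)) =
          (χ a b * χ₀ a b) * (χ a c * χ₀ a c)) ∧
      (∀ g h : G, (χ g h * χ₀ g h) * (χ h g * χ₀ h g) = 1) ∧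
      (∀ g : G, χ g g * χ₀ g g = 1) := by
  rintro _ rfl
  obtain ⟨⟨hleft, hright, hswap⟩, hone⟩ := mul_super_bicharacter_commutation_factor_general
    ⟨hχ_mul_left, hχ_mul_right, hχ_symm⟩
  exact ⟨hleft, hright, hswap, hone⟩
end

section
/- Let G be an abelian group, k a field, and χ : G × G → kˣ a bimultiplicative map with χ(g,g) = 1 for all g ∈ G. Let K be a subgroup of G and σ : K × K → kˣ a bimultiplicative map with χ(g,h) = σ(g,h)·σ(h,g)⁻¹ for all g, h ∈ K. Let t ∈ G be an element such that the cyclic subgroup ⟨t⟩ intersects K trivially (⟨t⟩ ∩ K = {e}). Then there exists a bimultiplicative map σ' on the subgroup generated by K and t which restricts to σ on K and satisfies χ(g,h) = σ'(g,h)·σ'(h,g)⁻¹ for all g, h in that subgroup. -/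
/-!
If `K ∩ L` is trivial, every element of `K ⊔ L` is uniquely a product `a * u` with `a ∈ K` and
`u ∈ L`. Given `σ` on `K` and `τ` on `L` with antisymmetrization `χ`, put
`σ' (a * u) (b * v) = σ a b * χ a v * τ u v`. The missing fourth factor `χ u b` of
`χ (a * u) (b * v)` comes from the antisymmetrization of `χ a v`, since `χ u b = (χ b u)⁻¹`.
For `L = ⟨t⟩` one can take `τ = 1`, because `χ (t ^ m) (t ^ n) = χ t t ^ (m * n) = 1`.
-/

open MonoidHom

section Bimultiplicative

/-- A bimultiplicative map into a group, bundled as a homomorphism into a group of homomorphisms,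
which is how bimultiplicative maps are encoded below. -/
def bimulHom {A B M : Type*} [MulOneClass A] [MulOneClass B] [CommGroup M] (f : A → B → M)
    (map_mul_left : ∀ a b c, f (a * b) c = f a c * f b c)
    (map_mul_right : ∀ a b c, f a (b * c) = f a b * f a c) : A →* B →* M :=
  MonoidHom.mk' (fun a ↦ MonoidHom.mk' (f a) (map_mul_right a))
    fun a b ↦ MonoidHom.ext (map_mul_left a b)

theorem mul_swap_eq_one_of_forall_self_eq_one {G M : Type*} [MulOneClass G] [CommMonoid M]
    {χ : G →* G →* M} (hχ : ∀ g, χ g g = 1) (g h : G) : χ g h * χ h g = 1 := by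
  simpa [hχ, mul_comm] using hχ (g * h)

theorem apply_eq_one_of_mem_zpowers {G M : Type*} [Group G] [CommGroup M] {χ : G →* G →* M}
    {t : G} (ht : χ t t = 1) (u v : Subgroup.zpowers t) : χ u v = 1 := by
  obtain ⟨_, m, rfl⟩ := u
  obtain ⟨_, n, rfl⟩ := v
  simp [ht]

/-- The bimultiplicative map on `A × B` with diagonal blocks `σ` and `τ`, the block `θ` from `A`
to `B`, and the trivial block from `B` to `A`. -/
def blockTriangular {A B M : Type*} [MulOneClass A] [MulOneClass B] [CommMonoid M]
    (σ : A →* A →* M) (θ : A →* B →* M) (τ : B →* B →* M) : A × B →* A × B →* M :=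
  (σ.compl₂ (fst A B) * θ.compl₂ (snd A B)).comp (fst A B) * (τ.compl₂ (snd A B)).comp (snd A B)

theorem blockTriangular_apply {A B M : Type*} [MulOneClass A] [MulOneClass B] [CommMonoid M]
    (σ : A →* A →* M) (θ : A →* B →* M) (τ : B →* B →* M) (x y : A × B) :
    blockTriangular σ θ τ x y = σ x.1 y.1 * θ x.1 y.2 * τ x.2 y.2 :=
  rfl

end Bimultiplicative

section Sup

variable {G M : Type*} [CommGroup G] [CommGroup M] {K L : Subgroup G}

/-- The internal direct product decomposition of `K ⊔ L` for disjoint subgroups `K` and `L`,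
given by `(a, u) ↦ a * u`. -/
noncomputable def prodMulEquivSup (hKL : Disjoint K L) : K × L ≃* (K ⊔ L : Subgroup G) :=
  MulEquiv.ofBijective
    ((Subgroup.inclusion (le_sup_left : K ≤ K ⊔ L)).coprod
      (Subgroup.inclusion (le_sup_right : L ≤ K ⊔ L)))
    ⟨fun _ _ h ↦ Subgroup.mul_injective_of_disjoint hKL (congrArg Subtype.val h), fun x ↦ by
      obtain ⟨a, ha, u, hu, hau⟩ := Subgroup.mem_sup.1 x.2
      exact ⟨(⟨a, ha⟩, ⟨u, hu⟩), Subtype.ext hau⟩⟩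

theorem coe_prodMulEquivSup (hKL : Disjoint K L) (p : K × L) :
    (prodMulEquivSup hKL p : G) = p.1 * p.2 :=
  rfl

theorem prodMulEquivSup_symm_inclusion_left (hKL : Disjoint K L) (a : K) :
    (prodMulEquivSup hKL).symm (Subgroup.inclusion le_sup_left a) = (a, 1) :=
  (MulEquiv.symm_apply_eq _).2 (Subtype.ext (by simp [coe_prodMulEquivSup]))

theorem prodMulEquivSup_symm_inclusion_right (hKL : Disjoint K L) (u : L) :
    (prodMulEquivSup hKL).symm (Subgroup.inclusion le_sup_right u) = (1, u) :=
  (MulEquiv.symm_apply_eq _).2 (Subtype.ext (by simp [coe_prodMulEquivSup]))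

theorem apply_mul_mul_eq_blockTriangular_div {χ : G →* G →* M}
    (hχ : ∀ g h, χ g h * χ h g = 1)
    {σ : K →* K →* M} (hσ : ∀ a b : K, χ a b = σ a b / σ b a)
    {τ : L →* L →* M} (hτ : ∀ u v : L, χ u v = τ u v / τ v u) (p q : K × L) :
    χ (p.1 * p.2) (q.1 * q.2) =
      blockTriangular σ ((χ.compl₂ L.subtype).comp K.subtype) τ p q /
        blockTriangular σ ((χ.compl₂ L.subtype).comp K.subtype) τ q p := by
  obtain ⟨a, u⟩ := p
  obtain ⟨b, v⟩ := q
  have hub : χ u b = (χ b u)⁻¹ := eq_inv_of_mul_eq_one_left (hχ u b)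
  calc χ (a * u) (b * v)
      = χ a b * χ a v * (χ u b * χ u v) := by rw [map_mul₂, map_mul, map_mul]
    _ = (σ a b / σ b a) * χ a v * ((χ b u)⁻¹ * (τ u v / τ v u)) := by rw [hσ, hub, hτ]
    _ = (σ a b * χ a v * τ u v) / (σ b a * χ b u * τ v u) := by
      simp only [div_eq_mul_inv, mul_inv, mul_comm, mul_left_comm, mul_assoc]

theorem extend_cocycle_trivial_intersection_general {χ : G →* G →* M}
    (hχ : ∀ g h, χ g h * χ h g = 1) (hKL : Disjoint K L)
    {σ : K →* K →* M} (hσ : ∀ a b : K, χ a b = σ a b / σ b a)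
    {τ : L →* L →* M} (hτ : ∀ u v : L, χ u v = τ u v / τ v u) :
    ∃ σ' : (K ⊔ L : Subgroup G) →* (K ⊔ L : Subgroup G) →* M,
      (∀ a b : K, σ' (Subgroup.inclusion le_sup_left a) (Subgroup.inclusion le_sup_left b) =
        σ a b) ∧
      (∀ u v : L, σ' (Subgroup.inclusion le_sup_right u) (Subgroup.inclusion le_sup_right v) =
        τ u v) ∧
      ∀ g h : (K ⊔ L : Subgroup G), χ g h = σ' g h / σ' h g := by
  let e := prodMulEquivSup hKL
  let β := blockTriangular σ ((χ.compl₂ L.subtype).comp K.subtype) τ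
  refine ⟨(β.compl₂ e.symm.toMonoidHom).comp e.symm.toMonoidHom, fun a b ↦ ?_, fun u v ↦ ?_,
    fun g h ↦ ?_⟩
  · simp [e, β, prodMulEquivSup_symm_inclusion_left, blockTriangular_apply]
  · simp [e, β, prodMulEquivSup_symm_inclusion_right, blockTriangular_apply]
  · obtain ⟨p, rfl⟩ := e.surjective g
    obtain ⟨q, rfl⟩ := e.surjective h
    simpa [e, β, coe_prodMulEquivSup] using apply_mul_mul_eq_blockTriangular_div hχ hσ hτ p q

end Sup

/- Extension step in Scheunert's theorem, trivial-intersection case: if a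
bimultiplicative `σ` with `χ g h = σ g h * (σ h g)⁻¹` is defined on a subgroup `K`
and `⟨t⟩ ∩ K = {e}`, then `σ` extends to the subgroup generated by `K` and `t`. -/
theorem extend_cocycle_trivial_intersection {k : Type*} [Field k]
    {G : Type*} [CommGroup G] (χ : G → G → kˣ)
    (hχ_mul_left : ∀ a b c : G, χ (a * b) c = χ a c * χ b c)
    (hχ_mul_right : ∀ a b c : G, χ a (b * c) = χ a b * χ a c)
    (hχ_diag : ∀ g : G, χ g g = 1)
    (K : Subgroup G) (σ : K → K → kˣ)
    (hσ_mul_left : ∀ a b c : K, σ (a * b) c = σ a c * σ b c)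
    (hσ_mul_right : ∀ a b c : K, σ a (b * c) = σ a b * σ a c)
    (hσχ : ∀ g h : K, χ (g : G) (h : G) = σ g h * (σ h g)⁻¹)
    (t : G) (ht : Subgroup.zpowers t ⊓ K = ⊥) :
    ∃ σ' : (K ⊔ Subgroup.zpowers t : Subgroup G) →
           (K ⊔ Subgroup.zpowers t : Subgroup G) → kˣ,
      (∀ a b c, σ' (a * b) c = σ' a c * σ' b c) ∧
      (∀ a b c, σ' a (b * c) = σ' a b * σ' a c) ∧
      (∀ (g h : G) (hg : g ∈ K) (hh : h ∈ K),
        σ' ⟨g, (le_sup_left : K ≤ K ⊔ Subgroup.zpowers t) hg⟩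
           ⟨h, (le_sup_left : K ≤ K ⊔ Subgroup.zpowers t) hh⟩ = σ ⟨g, hg⟩ ⟨h, hh⟩) ∧
      (∀ g h : (K ⊔ Subgroup.zpowers t : Subgroup G),
        χ (g : G) (h : G) = σ' g h * (σ' h g)⁻¹) := by
  obtain ⟨σ', hσ', -, hχσ'⟩ := extend_cocycle_trivial_intersection_general
    (mul_swap_eq_one_of_forall_self_eq_one (χ := bimulHom χ hχ_mul_left hχ_mul_right) hχ_diag)
    (disjoint_iff.2 ht).symm (σ := bimulHom σ hσ_mul_left hσ_mul_right)
    (fun a b ↦ (hσχ a b).trans (div_eq_mul_inv _ _).symm) (τ := 1)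
    (fun u v ↦ by simpa using apply_eq_one_of_mem_zpowers (hχ_diag t) u v)
  exact ⟨fun g h ↦ σ' g h, map_mul₂ σ', fun g ↦ map_mul (σ' g),
    fun g h hg hh ↦ hσ' ⟨g, hg⟩ ⟨h, hh⟩, fun g h ↦ (hχσ' g h).trans (div_eq_mul_inv _ _)⟩
end
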